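/- arXiv:2405.14250 — 4 statements merged into one kernel-verified Lean document; each statement's English description precedes it below -/
import Mathlib

section
/- Let d : ℕ, let Σ be a real symmetric positive semidefinite d×d matrix, let β : ℝ → ℝ be continuous with β s > 0 for all s, set B t = ∫_0^t β s ds and Σ_t = exp(−2·B t)·Σ + (1 − exp(−2·B t))·I, and fix T > 0. Then for every s ∈ [0, T), the matrix-valued map s ↦ exp(2·(B T − B (T−s))) • (Σ_{T−s})⁻¹ has derivative (2·β (T−s)·exp(2·(B T − B (T−s)))) • ((Σ_{T−s})⁻¹ * (Σ_{T−s})⁻¹) at s. -/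
open Matrix

attribute [local instance] Matrix.normedAddCommGroup Matrix.normedSpace

/-!
In the integrated time `τ = B t` the forward covariance is `Σ_τ = e^{-2τ} (S + (e^{2τ} - 1) I)`,
so `e^{-2τ} Σ_τ⁻¹` is the resolvent of `-S` at `e^{2τ} - 1`. The derivative of a resolvent is
minus its square, which gives `d/dτ (e^{-2τ} Σ_τ⁻¹) = -2 e^{-2τ} Σ_τ⁻²`; multiplying by the constant
`e^{2 B T}` and substituting `τ = B (T - s)` yields the identity.
-/

/-- The covariance, at integrated time `τ = B t`, of the forward Ornstein–Uhlenbeck flow started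
from covariance `S`. It depends on `t` only through `τ` and makes sense in any real algebra. -/
noncomputable def forwardCovariance {A : Type*} [Ring A] [Algebra ℝ A] (S : A) (τ : ℝ) : A :=
  Real.exp (-2 * τ) • S + (1 - Real.exp (-2 * τ)) • (1 : A)

section Algebra

variable {A : Type*} [Ring A] [Algebra ℝ A]

theorem ringInverse_forwardCovariance (S : A) (τ : ℝ) :
    Ring.inverse (forwardCovariance S τ) =
      resolvent (Real.exp (-2 * τ) • -S) (1 - Real.exp (-2 * τ)) := by
  rw [resolvent, forwardCovariance, smul_neg, sub_neg_eq_add, Algebra.algebraMap_eq_smul_one,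
    add_comm]

theorem exp_smul_ringInverse_forwardCovariance (S : A) (τ : ℝ) :
    Real.exp (-2 * τ) • Ring.inverse (forwardCovariance S τ) =
      resolvent (-S) (Real.exp (2 * τ) - 1) := by
  have hne : Real.exp (-2 * τ) ≠ 0 := Real.exp_ne_zero _
  have hinv : (Real.exp (-2 * τ))⁻¹ = Real.exp (2 * τ) := by rw [← Real.exp_neg, neg_mul, neg_neg]
  have hscale := spectrum.units_smul_resolvent (r := Units.mk0 _ hne)
    (s := 1 - Real.exp (-2 * τ)) (a := Real.exp (-2 * τ) • -S)
  simp only [Units.smul_def, Units.val_inv_eq_inv_val, Units.val_mk0, inv_smul_smul₀ hne,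
    smul_eq_mul, mul_sub, mul_one, inv_mul_cancel₀ hne] at hscale
  rw [ringInverse_forwardCovariance, hscale, hinv]

theorem mem_resolventSet_of_isUnit_forwardCovariance {S : A} {τ : ℝ}
    (hunit : IsUnit (forwardCovariance S τ)) :
    Real.exp (2 * τ) - 1 ∈ resolventSet ℝ (-S) := by
  rw [spectrum.isUnit_resolvent, ← exp_smul_ringInverse_forwardCovariance]
  exact hunit.ringInverse.smul (Units.mk0 _ (Real.exp_ne_zero (-2 * τ)))

end Algebra

section BanachAlgebra

variable {A : Type*} [NormedRing A] [NormedAlgebra ℝ A] [CompleteSpace A]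

theorem hasDerivAt_exp_smul_ringInverse_forwardCovariance {S : A} {τ : ℝ}
    (hunit : IsUnit (forwardCovariance S τ)) :
    HasDerivAt (fun τ => Real.exp (-2 * τ) • Ring.inverse (forwardCovariance S τ))
      ((-2 * Real.exp (-2 * τ)) •
        (Ring.inverse (forwardCovariance S τ) * Ring.inverse (forwardCovariance S τ))) τ := by
  have hexp : HasDerivAt (fun τ => Real.exp (2 * τ) - 1) (Real.exp (2 * τ) * 2) τ := by
    simpa using ((hasDerivAt_id τ).const_mul 2).exp.sub_const 1
  have hresolvent := (spectrum.hasDerivAt_resolvent_const_left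
    (mem_resolventSet_of_isUnit_forwardCovariance hunit)).scomp τ hexp
  have hcancel : Real.exp (2 * τ) * Real.exp (-2 * τ) = 1 := by
    rw [← Real.exp_add, neg_mul, add_neg_cancel, Real.exp_zero]
  simp only [Function.comp_def, ← exp_smul_ringInverse_forwardCovariance] at hresolvent
  refine hresolvent.congr_deriv ?_
  rw [sq, smul_mul_smul_comm, smul_neg, smul_smul, ← neg_smul]
  congr 1
  linear_combination (-2 * Real.exp (-2 * τ)) * hcancel

theorem backward_sde_antiderivative_general {S : A} {B : ℝ → ℝ} {b T s : ℝ}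
    (hB : HasDerivAt B b (T - s)) (hunit : IsUnit (forwardCovariance S (B (T - s)))) :
    HasDerivAt
      (fun s => Real.exp (2 * (B T - B (T - s))) •
        Ring.inverse (forwardCovariance S (B (T - s))))
      ((2 * b * Real.exp (2 * (B T - B (T - s)))) •
        (Ring.inverse (forwardCovariance S (B (T - s))) *
          Ring.inverse (forwardCovariance S (B (T - s))))) s := by
  have hsplit (τ : ℝ) : Real.exp (2 * (B T - τ)) = Real.exp (2 * B T) * Real.exp (-2 * τ) := by
    rw [← Real.exp_add]
    ring_nf
  have hcomp := ((hasDerivAt_exp_smul_ringInverse_forwardCovariance hunit).scomp s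
    (hB.comp_const_sub T s)).const_smul (Real.exp (2 * B T))
  simp only [hsplit, mul_smul]
  refine hcomp.congr_deriv ?_
  simp only [smul_smul]
  congr 1
  ring

end BanachAlgebra

open scoped ComplexOrder in
theorem posDef_forwardCovariance {n 𝕜 : Type*} [Fintype n] [DecidableEq n] [RCLike 𝕜]
    {S : Matrix n n 𝕜} (hS : S.PosSemidef) {τ : ℝ} (hτ : 0 < τ) :
    (forwardCovariance S τ).PosDef := by
  have hexp : Real.exp (-2 * τ) < 1 := Real.exp_lt_one_iff.2 (by linarith)
  exact PosDef.posSemidef_add (hS.smul (Real.exp_pos _).le) (PosDef.one.smul (sub_pos.2 hexp))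

/-- Key antiderivative identity in the proof of Proposition 2:
for `A_s = e^{2 (B T - B (T-s))} Σ_{T-s}⁻¹` one has
`dA_s = 2 β (T-s) e^{2 (B T - B (T-s))} Σ_{T-s}⁻² ds` on `[0, T)`. -/
theorem backward_sde_antiderivative
    (d : ℕ) (S : Matrix (Fin d) (Fin d) ℝ)
    (hS_sym : S.IsSymm) (hS_psd : S.PosSemidef)
    (β : ℝ → ℝ) (hβ : Continuous β) (hβpos : ∀ s, 0 < β s)
    (B : ℝ → ℝ) (hB : ∀ t, B t = ∫ s in (0:ℝ)..t, β s)
    (St : ℝ → Matrix (Fin d) (Fin d) ℝ)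
    (hSt : ∀ t, St t = Real.exp (-2 * B t) • S
      + (1 - Real.exp (-2 * B t)) • (1 : Matrix (Fin d) (Fin d) ℝ))
    (T : ℝ) (hT : 0 < T)
    (s : ℝ) (hs : s ∈ Set.Ico (0 : ℝ) T) :
    HasDerivAt (fun s => Real.exp (2 * (B T - B (T - s))) • (St (T - s))⁻¹)
      ((2 * β (T - s) * Real.exp (2 * (B T - B (T - s)))) •
        ((St (T - s))⁻¹ * (St (T - s))⁻¹)) s := by
  obtain rfl : B = fun t => ∫ s in (0 : ℝ)..t, β s := funext hB
  obtain rfl : St = fun t => forwardCovariance S (∫ s in (0 : ℝ)..t, β s) := funext hSt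
  have hpos : 0 < ∫ u in (0 : ℝ)..(T - s), β u :=
    intervalIntegral.intervalIntegral_pos_of_pos (hβ.intervalIntegrable _ _) hβpos
      (sub_pos.2 hs.2)
  simp only [nonsing_inv_eq_ringInverse]
  -- `HasDerivAt` sees only the topology, so the norm on matrices may be any that makes them a
  -- Banach algebra.
  exact @backward_sde_antiderivative_general _ Matrix.linftyOpNormedRing
    Matrix.linftyOpNormedAlgebra inferInstance _ _ _ _ _
    (hβ.integral_hasStrictDerivAt 0 _).hasDerivAt (posDef_forwardCovariance hS_psd hpos).isUnit
end

section
/- Let d : ℕ, let Σ be a real symmetric positive semidefinite d×d matrix, let β : ℝ → ℝ be continuous with β s > 0 for all s, set B t = ∫_0^t β s ds and Σ_t = exp(−2·B t)·Σ + (1 − exp(−2·B t))·I, and fix T > 0 and t ∈ [0, T). Write C = B T − B (T−t), A = exp(−C) • (Σ_{T−t} * (Σ_T)⁻¹) and K = Σ_{T−t} − exp(−2·C) • (Σ_{T−t} * Σ_{T−t} * (Σ_T)⁻¹). Then for every d×d real matrix M: A * M * Aᵀ + K = Σ_{T−t} + exp(−2·C) • (Σ_{T−t} * Σ_{T−t}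 * (Σ_T)⁻¹ * ((Σ_{T−t})⁻¹ * M * (Σ_T)⁻¹ * Σ_{T−t} − I)). -/
open Matrix

/-!
The forward covariances are affine functions of the same matrix `S`, so they commute with each
other and with each other's inverses. With `P = Σ_{T-t}` and `J = Σ_T⁻¹`, this allows the factor
`P * P⁻¹` to be inserted in `P * J * M * J * P`, which produces the `M`-term of the formula;
the remaining terms are those of `K`.
-/

theorem mul_mul_conjTranspose_eq_of_commute {n R : Type*} [Fintype n] [DecidableEq n] [CommRing R]
    [StarRing R] {P J : Matrix n n R} (hP : P.IsHermitian) (hJ : J.IsHermitian)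
    (hPJ : Commute P J) (hP_unit : IsUnit P) (M : Matrix n n R) :
    P * J * M * (P * J)ᴴ = P * P * J * (P⁻¹ * M * J * P) := by
  have hPP : P * P⁻¹ = 1 := mul_nonsing_inv P ((isUnit_iff_isUnit_det P).mp hP_unit)
  calc
    P * J * M * (P * J)ᴴ = P * J * M * (J * P) := by rw [conjTranspose_mul, hP.eq, hJ.eq]
    _ = P * J * (P * P⁻¹) * M * (J * P) := by rw [hPP, mul_one]
    _ = P * (J * P) * (P⁻¹ * M * J * P) := by simp only [mul_assoc]
    _ = P * P * J * (P⁻¹ * M * J * P) := by rw [← hPJ.eq, mul_assoc P P J]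

noncomputable section BackwardCovariance

open scoped ComplexOrder

variable {n 𝕜 : Type*} [DecidableEq n] [RCLike 𝕜]

/-- The covariance `Σ_u` of the forward process with data covariance `S`, as a function of the
accumulated noise `b = B u` rather than of the time `u`. -/
def forwardCov (S : Matrix n n 𝕜) (b : ℝ) : Matrix n n 𝕜 :=
  Real.exp (-2 * b) • S + (1 - Real.exp (-2 * b)) • (1 : Matrix n n 𝕜)

theorem forwardCov_posDef {S : Matrix n n 𝕜} (hS : S.PosSemidef) {b : ℝ} (hb : 0 < b) :
    (forwardCov S b).PosDef := by
  have h_exp_lt_one : Real.exp (-2 * b) < 1 := Real.exp_lt_one_iff.mpr (by linarith)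
  exact PosDef.posSemidef_add (hS.smul (Real.exp_pos _).le)
    (PosDef.one.smul (sub_pos.mpr h_exp_lt_one))

variable [Fintype n]

theorem commute_forwardCov (S : Matrix n n 𝕜) (a b : ℝ) :
    Commute (forwardCov S a) (forwardCov S b) := by
  have h_left : Commute S (forwardCov S b) :=
    ((Commute.refl S).smul_right _).add_right ((Commute.one_right S).smul_right _)
  exact (h_left.smul_left _).add_left ((Commute.one_left _).smul_left _)

theorem commute_forwardCov_inv (S : Matrix n n 𝕜) (a b : ℝ) :
    Commute (forwardCov S a) (forwardCov S b)⁻¹ := by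
  rw [← Matrix.zpow_neg_one]
  exact Matrix.Commute.zpow_right (commute_forwardCov S a b) (-1)

/-- The matrix `A` in the solution `y_t = A y₀ + ξ_t` of the backward SDE, where `a = B (T - t)`
and `b = B T`. -/
def backwardTransition (S : Matrix n n 𝕜) (a b : ℝ) : Matrix n n 𝕜 :=
  Real.exp (-(b - a)) • (forwardCov S a * (forwardCov S b)⁻¹)

/-- The covariance `K` of the Gaussian noise `ξ_t` in the solution `y_t = A y₀ + ξ_t` of the
backward SDE, where `a = B (T - t)` and `b = B T`. -/
def backwardNoiseCov (S : Matrix n n 𝕜) (a b : ℝ) : Matrix n n 𝕜 :=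
  forwardCov S a
    - Real.exp (-2 * (b - a)) • (forwardCov S a * forwardCov S a * (forwardCov S b)⁻¹)

theorem backwardTransition_mul_mul_conjTranspose {S : Matrix n n 𝕜} (hS : S.PosSemidef) {a b : ℝ}
    (ha : 0 < a) (hb : 0 < b) (M : Matrix n n 𝕜) :
    backwardTransition S a b * M * (backwardTransition S a b)ᴴ
      = Real.exp (-2 * (b - a)) • (forwardCov S a * forwardCov S a * (forwardCov S b)⁻¹ *
          ((forwardCov S a)⁻¹ * M * (forwardCov S b)⁻¹ * forwardCov S a)) := by
  have hP : (forwardCov S a).PosDef := forwardCov_posDef hS ha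
  have hJ : (forwardCov S b)⁻¹.PosDef := (forwardCov_posDef hS hb).inv
  have h_exp : Real.exp (-2 * (b - a)) = Real.exp (-(b - a)) * Real.exp (-(b - a)) := by
    rw [← Real.exp_add]
    ring_nf
  rw [← mul_mul_conjTranspose_eq_of_commute hP.isHermitian hJ.isHermitian
    (commute_forwardCov_inv S a b) hP.isUnit M, h_exp, backwardTransition, conjTranspose_smul,
    star_trivial]
  simp only [smul_mul_assoc, mul_smul_comm, smul_smul]

theorem backward_sde_covariance_general {S : Matrix n n 𝕜} (hS : S.PosSemidef) {a b : ℝ}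
    (ha : 0 < a) (hb : 0 < b) (M : Matrix n n 𝕜) :
    backwardTransition S a b * M * (backwardTransition S a b)ᴴ + backwardNoiseCov S a b
      = forwardCov S a + Real.exp (-2 * (b - a)) •
          (forwardCov S a * forwardCov S a * (forwardCov S b)⁻¹ *
            ((forwardCov S a)⁻¹ * M * (forwardCov S b)⁻¹ * forwardCov S a - 1)) := by
  rw [backwardTransition_mul_mul_conjTranspose hS ha hb, backwardNoiseCov, Matrix.mul_sub,
    Matrix.mul_one, smul_sub]
  abel

end BackwardCovariance

/-- Equation (14) of Proposition 2: the covariance of the backward SDE solution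
`y_t = A y₀ + ξ_t` satisfies
`A M Aᵀ + K = Σ_{T-t} + e^{-2C} Σ_{T-t}² Σ_T⁻¹ (Σ_{T-t}⁻¹ M Σ_T⁻¹ Σ_{T-t} - I)`. -/
theorem backward_sde_covariance
    (d : ℕ) (S : Matrix (Fin d) (Fin d) ℝ)
    (hS_sym : S.IsSymm) (hS_psd : S.PosSemidef)
    (β : ℝ → ℝ) (hβ : Continuous β) (hβpos : ∀ s, 0 < β s)
    (B : ℝ → ℝ) (hB : ∀ t, B t = ∫ s in (0:ℝ)..t, β s)
    (St : ℝ → Matrix (Fin d) (Fin d) ℝ)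
    (hSt : ∀ t, St t = Real.exp (-2 * B t) • S
      + (1 - Real.exp (-2 * B t)) • (1 : Matrix (Fin d) (Fin d) ℝ))
    (T : ℝ) (hT : 0 < T) (t : ℝ) (ht : t ∈ Set.Ico (0 : ℝ) T)
    (C : ℝ) (hC : C = B T - B (T - t))
    (A K : Matrix (Fin d) (Fin d) ℝ)
    (hA : A = Real.exp (-C) • (St (T - t) * (St T)⁻¹))
    (hK : K = St (T - t)
      - Real.exp (-2 * C) • (St (T - t) * St (T - t) * (St T)⁻¹))
    (M : Matrix (Fin d) (Fin d) ℝ) :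
    A * M * Aᵀ + K
      = St (T - t) + Real.exp (-2 * C) •
          (St (T - t) * St (T - t) * (St T)⁻¹ *
            ((St (T - t))⁻¹ * M * (St T)⁻¹ * St (T - t)
              - (1 : Matrix (Fin d) (Fin d) ℝ))) := by
  have hB_pos {u : ℝ} (hu : 0 < u) : 0 < B u := by
    rw [hB]
    exact intervalIntegral.intervalIntegral_pos_of_pos (hβ.intervalIntegrable 0 u) hβpos hu
  obtain rfl : St = fun u ↦ forwardCov S (B u) := funext hSt
  subst hC hA hK
  rw [← conjTranspose_eq_transpose_of_trivial]
  exact backward_sde_covariance_general hS_psd (hB_pos (sub_pos.mpr ht.2)) (hB_pos hT) M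
end

section
/- Let a, c, λ be real numbers with 0 < c, c < 1, c ≤ a ≤ 1 and λ ≥ 0. Set λ_t = a·λ + 1 − a, λ_T = c·λ + 1 − c, λ̃ = λ_t + (c/a)·λ_t²·(1/λ_T)·(1/λ_T − 1) and λ̂ = λ_t/λ_T. Then λ̃ lies between λ_t and λ̂, i.e. min λ_t λ̂ ≤ λ̃ ∧ λ̃ ≤ max λ_t λ̂. -/
/-!
The SDE eigenvalue is the affine combination `λ̃ = (1 - θ) λ_t + θ λ̂` with weight
`θ = c λ_t / (a λ_T)`. Since `a λ_T - c λ_t = a - c`, the inequality `θ ≤ 1` is just `c ≤ a`.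
-/

section ForwardEigenvalue

variable {R : Type*} [CommRing R]

/-- The eigenvalue `λ_t` of the forward marginal covariance `a Σ + (1 - a) I` belonging to the
eigenvalue `lam` of the data covariance `Σ`, where `a = e^{-2 B_t}`. At `e^{-2 B_T}` it is `λ_T`. -/
def forwardEigenvalue (a lam : R) : R :=
  a * lam + 1 - a

theorem mul_forwardEigenvalue_sub_mul_forwardEigenvalue (a c lam : R) :
    a * forwardEigenvalue c lam - c * forwardEigenvalue a lam = a - c := by
  unfold forwardEigenvalue
  ring

variable [LinearOrder R] [IsStrictOrderedRing R] {a c lam : R}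

theorem forwardEigenvalue_nonneg (ha : 0 ≤ a) (ha1 : a ≤ 1) (hlam : 0 ≤ lam) :
    0 ≤ forwardEigenvalue a lam := by
  unfold forwardEigenvalue
  linarith [mul_nonneg ha hlam]

theorem forwardEigenvalue_pos (ha : 0 ≤ a) (ha1 : a < 1) (hlam : 0 ≤ lam) :
    0 < forwardEigenvalue a lam := by
  unfold forwardEigenvalue
  linarith [mul_nonneg ha hlam]

theorem mul_forwardEigenvalue_le_mul_forwardEigenvalue (hca : c ≤ a) :
    c * forwardEigenvalue a lam ≤ a * forwardEigenvalue c lam := by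
  linarith [mul_forwardEigenvalue_sub_mul_forwardEigenvalue a c lam]

end ForwardEigenvalue

section GenerativeEigenvalues

variable {K : Type*} [Field K]

/-- The eigenvalue `λ̂` at time `t` of the covariance generated by the probability flow ODE started
from `N(0, I)` at time `T`, where `a = e^{-2 B_t}` and `c = e^{-2 B_T}`. -/
def odeEigenvalue (a c lam : K) : K :=
  forwardEigenvalue a lam / forwardEigenvalue c lam

/-- The eigenvalue `λ̃` at time `t` of the covariance generated by the backward SDE started from
`N(0, I)` at time `T`, where `a = e^{-2 B_t}` and `c = e^{-2 B_T}`. -/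
def sdeEigenvalue (a c lam : K) : K :=
  forwardEigenvalue a lam + (c / a) * forwardEigenvalue a lam ^ 2 *
    (1 / forwardEigenvalue c lam) * (1 / forwardEigenvalue c lam - 1)

/-- The weight `θ` of the ODE eigenvalue when the SDE eigenvalue is written as an affine combination
of the exact forward eigenvalue and the ODE eigenvalue. -/
def sdeWeight (a c lam : K) : K :=
  c * forwardEigenvalue a lam / (a * forwardEigenvalue c lam)

theorem sdeEigenvalue_eq_lineMap (a c lam : K) :
    sdeEigenvalue a c lam =
      AffineMap.lineMap (forwardEigenvalue a lam) (odeEigenvalue a c lam) (sdeWeight a c lam) := by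
  rw [AffineMap.lineMap_apply_ring', sdeEigenvalue, odeEigenvalue, sdeWeight]
  ring

variable [LinearOrder K] [IsStrictOrderedRing K] {a c lam : K}

theorem sdeWeight_mem_Icc (hc : 0 ≤ c) (ha : 0 < a) (hca : c ≤ a)
    (ht : 0 ≤ forwardEigenvalue a lam) (hT : 0 < forwardEigenvalue c lam) :
    sdeWeight a c lam ∈ Set.Icc 0 1 :=
  ⟨div_nonneg (mul_nonneg hc ht) (mul_pos ha hT).le,
    (div_le_one (mul_pos ha hT)).2 (mul_forwardEigenvalue_le_mul_forwardEigenvalue hca)⟩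

theorem eigenvalue_sandwich_general (hc : 0 ≤ c) (ha : 0 < a) (hca : c ≤ a)
    (ht : 0 ≤ forwardEigenvalue a lam) (hT : 0 < forwardEigenvalue c lam) :
    sdeEigenvalue a c lam ∈ Set.uIcc (forwardEigenvalue a lam) (odeEigenvalue a c lam) := by
  rw [sdeEigenvalue_eq_lineMap, ← segment_eq_uIcc, segment_eq_image_lineMap]
  exact Set.mem_image_of_mem _ (sdeWeight_mem_Icc hc ha hca ht hT)

end GenerativeEigenvalues

/-- Eigenvalue sandwich underlying the case analysis in the proof of Proposition 4:
the SDE generative eigenvalue `λ̃` lies between the exact eigenvalue `λ_t` and the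
ODE generative eigenvalue `λ̂`. -/
theorem eigenvalue_sandwich
    (a c lam : ℝ) (hc : 0 < c) (hc1 : c < 1) (hca : c ≤ a) (ha : a ≤ 1) (hlam : 0 ≤ lam)
    (lamt lamT lamtld lamhat : ℝ)
    (hlamt : lamt = a * lam + 1 - a)
    (hlamT : lamT = c * lam + 1 - c)
    (hlamtld : lamtld = lamt + (c / a) * lamt ^ 2 * (1 / lamT) * (1 / lamT - 1))
    (hlamhat : lamhat = lamt / lamT) :
    min lamt lamhat ≤ lamtld ∧ lamtld ≤ max lamt lamhat := by
  subst hlamtld hlamhat hlamt hlamT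
  have ha0 : 0 < a := hc.trans_le hca
  exact eigenvalue_sandwich_general hc.le ha0 hca
    (forwardEigenvalue_nonneg ha0.le ha hlam) (forwardEigenvalue_pos hc.le hc1 hlam)
end

section
/- Let M N : ℕ with M > 0 and N > 0, let G = ZMod M × ZMod N, and let t : Fin 3 → G → ℝ. Define the ADSN covariance matrix Σ : Matrix (Fin 3 × G) (Fin 3 × G) ℝ by Σ ((i,x),(j,y)) = ∑_{z ∈ G} t i (x − z) · t j (y − z), the character χ_ξ : G → ℂ, χ_ξ (x₁,x₂) = Complex.exp (2·π·Complex.I·((x₁.val·ξ₁.val : ℝ)/M + (x₂.val·ξ₂.val : ℝ)/N)) for ξ = (ξ₁,ξ₂) ∈ G, and the discrete Fourier coefficients t̂ i ξ = ∑_{x ∈ G} (t i x : ℂ) · conj (χ_ξ x). Then for every ξ ∈ G, the vector u : Fin 3 × G → ℂ, u (i,x) = t̂ i ξ · χ_ξ x, satisfies (Σ.map (↑· : ℝ → ℂ)).mulVec u = (∑_{c : Fin 3} Complex.normSq (t̂ c ξ) : ℂ) • u. -/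
open Matrix Complex

/-!
The covariance factors as `T * Tᴴ`, where `T` convolves a single signal with each channel of the
texton. A character `χ` is an eigenfunction of every translation-invariant operator, so `T` sends it
to the mode `u (i, x) = t̂ i * χ x`, while `Tᴴ` sends `u` back to `(∑ c, |t̂ c|²) • χ`. Hence
`T * Tᴴ` multiplies `u` by `∑ c, |t̂ c|²`.
-/

section FiniteGroup

open scoped ComplexConjugate

variable {ι G 𝕜 : Type*}

/-- The matrix of the operator that convolves a signal on `G` with every channel of the texton
`t`. -/
def textonConvolution [Sub G] (t : ι → G → 𝕜) : Matrix (ι × G) G 𝕜 :=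
  of fun p z => t p.1 (p.2 - z)

variable [RCLike 𝕜] [AddGroup G]

lemma addChar_eq_conj_sub_mul [Finite G] (χ : AddChar G 𝕜) (x z : G) :
    χ z = conj (χ (x - z)) * χ x := by
  have hχx : χ x = χ (x - z) * χ z := by rw [← χ.map_add_eq_mul, sub_add_cancel]
  rw [hχx, ← mul_assoc, RCLike.conj_mul, χ.norm_apply]
  simp

variable [Fintype G]

/-- The unnormalized discrete Fourier coefficient of `f` at the character `χ`. -/
def discreteFourierCoeff (f : G → 𝕜) (χ : AddChar G 𝕜) : 𝕜 :=
  ∑ x, f x * conj (χ x)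

/-- The covariance matrix of the ADSN field of a texton `t` with channels indexed by `ι`, that is,
of the channelwise convolutions of `t` with one common white noise. The second factor is conjugated
so that `t` may be complex-valued. -/
def adsnCovariance (t : ι → G → 𝕜) : Matrix (ι × G) (ι × G) 𝕜 :=
  of fun p q => ∑ z, t p.1 (p.2 - z) * conj (t q.1 (q.2 - z))

/-- The multichannel wave of frequency `χ` whose amplitude in each channel is the Fourier
coefficient of the texton `t`; it is the eigenvector of the ADSN covariance. -/
def adsnMode (t : ι → G → 𝕜) (χ : AddChar G 𝕜) : ι × G → 𝕜 :=
  fun p => discreteFourierCoeff (t p.1) χ * χ p.2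

lemma sum_sub_mul_addChar (f : G → 𝕜) (χ : AddChar G 𝕜) (x : G) :
    ∑ z, f (x - z) * χ z = discreteFourierCoeff f χ * χ x :=
  calc ∑ z, f (x - z) * χ z
      = ∑ z, f (x - z) * conj (χ (x - z)) * χ x := by
        simp_rw [mul_assoc, ← addChar_eq_conj_sub_mul]
    _ = ∑ w, f w * conj (χ w) * χ x :=
        (Equiv.subLeft x).sum_comp fun w => f w * conj (χ w) * χ x
    _ = discreteFourierCoeff f χ * χ x := by rw [discreteFourierCoeff, Finset.sum_mul]

lemma sum_conj_sub_mul_addChar (f : G → 𝕜) (χ : AddChar G 𝕜) (z : G) :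
    ∑ y, conj (f (y - z)) * χ y = conj (discreteFourierCoeff f χ) * χ z :=
  calc ∑ y, conj (f (y - z)) * χ y
      = ∑ y, conj (f (y - z)) * χ (y - z) * χ z := by
        simp_rw [mul_assoc, ← χ.map_add_eq_mul, sub_add_cancel]
    _ = ∑ w, conj (f w) * χ w * χ z :=
        (Equiv.subRight z).sum_comp fun w => conj (f w) * χ w * χ z
    _ = conj (discreteFourierCoeff f χ) * χ z := by
        simp only [discreteFourierCoeff, map_sum, map_mul, RCLike.conj_conj, Finset.sum_mul]

lemma adsnCovariance_eq_mul_conjTranspose (t : ι → G → 𝕜) :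
    adsnCovariance t = textonConvolution t * (textonConvolution t)ᴴ :=
  rfl

lemma textonConvolution_mulVec_addChar (t : ι → G → 𝕜) (χ : AddChar G 𝕜) :
    textonConvolution t *ᵥ χ = adsnMode t χ :=
  funext fun p => sum_sub_mul_addChar (t p.1) χ p.2

variable [Fintype ι]

lemma conjTranspose_textonConvolution_mulVec_adsnMode (t : ι → G → 𝕜) (χ : AddChar G 𝕜) :
    (textonConvolution t)ᴴ *ᵥ adsnMode t χ
      = ((∑ c, ‖discreteFourierCoeff (t c) χ‖ ^ 2 : ℝ) : 𝕜) • ⇑χ := by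
  funext z
  calc ((textonConvolution t)ᴴ *ᵥ adsnMode t χ) z
      = ∑ c, ∑ y, conj (t c (y - z)) * (discreteFourierCoeff (t c) χ * χ y) :=
        Fintype.sum_prod_type _
    _ = ∑ c, discreteFourierCoeff (t c) χ * ∑ y, conj (t c (y - z)) * χ y := by
        simp_rw [Finset.mul_sum, mul_left_comm]
    _ = ∑ c, (‖discreteFourierCoeff (t c) χ‖ : 𝕜) ^ 2 * χ z := by
        simp_rw [sum_conj_sub_mul_addChar, ← mul_assoc, RCLike.mul_conj]
    _ = (((∑ c, ‖discreteFourierCoeff (t c) χ‖ ^ 2 : ℝ) : 𝕜) • ⇑χ) z := by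
        simp [Finset.sum_mul]

theorem adsn_covariance_eigenvector_general (t : ι → G → 𝕜) (χ : AddChar G 𝕜) :
    adsnCovariance t *ᵥ adsnMode t χ
      = ((∑ c, ‖discreteFourierCoeff (t c) χ‖ ^ 2 : ℝ) : 𝕜) • adsnMode t χ := by
  rw [adsnCovariance_eq_mul_conjTranspose, ← mulVec_mulVec,
    conjTranspose_textonConvolution_mulVec_adsnMode, mulVec_smul, textonConvolution_mulVec_addChar]

end FiniteGroup

section Torus

variable {M N : ℕ} [NeZero M] [NeZero N]

/-- The character of frequency `ξ` on the discrete torus `ZMod M × ZMod N`. -/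
noncomputable def torusAddChar (ξ : ZMod M × ZMod N) : AddChar (ZMod M × ZMod N) ℂ :=
  (ZMod.stdAddChar.mulShift ξ.1).compAddMonoidHom (AddMonoidHom.fst _ _) *
    (ZMod.stdAddChar.mulShift ξ.2).compAddMonoidHom (AddMonoidHom.snd _ _)

lemma stdAddChar_mul_eq_exp (k x : ZMod M) :
    ZMod.stdAddChar (k * x)
      = exp (2 * Real.pi * I * ((((x.val * k.val : ℕ) : ℝ) / M : ℝ) : ℂ)) := by
  have hkx : k * x = ((x.val * k.val : ℕ) : ℤ) := by simp [mul_comm]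
  rw [hkx, ZMod.stdAddChar_coe]
  push_cast
  rw [mul_div_assoc]

lemma torusAddChar_apply_eq_exp (ξ x : ZMod M × ZMod N) :
    torusAddChar ξ x = exp (2 * Real.pi * I *
      ((((x.1.val * ξ.1.val : ℕ) : ℝ) / M + ((x.2.val * ξ.2.val : ℕ) : ℝ) / N : ℝ) : ℂ)) := by
  rw [ofReal_add, mul_add, exp_add, ← stdAddChar_mul_eq_exp, ← stdAddChar_mul_eq_exp]
  rfl

end Torus

/-- Appendix F.2, equation (33): for each frequency `ξ`, the vector
`u (i, x) = t̂ i ξ · χ_ξ x` is an eigenvector of the (complexified) ADSN covariance matrix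
with eigenvalue `|t̂ 0 ξ|² + |t̂ 1 ξ|² + |t̂ 2 ξ|²`. -/
theorem adsn_covariance_eigenvector
    (M N : ℕ) [NeZero M] [NeZero N] (hM : 0 < M) (hN : 0 < N)
    (t : Fin 3 → ZMod M × ZMod N → ℝ)
    (S : Matrix (Fin 3 × (ZMod M × ZMod N)) (Fin 3 × (ZMod M × ZMod N)) ℝ)
    (hS : ∀ i j x y, S (i, x) (j, y) = ∑ z : ZMod M × ZMod N, t i (x - z) * t j (y - z))
    (χ : ZMod M × ZMod N → ZMod M × ZMod N → ℂ)
    (hχ : ∀ ξ x, χ ξ x = Complex.exp (2 * Real.pi * Complex.I *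
      ((((x.1.val * ξ.1.val : ℕ) : ℝ) / M + ((x.2.val * ξ.2.val : ℕ) : ℝ) / N : ℝ) : ℂ)))
    (that : Fin 3 → ZMod M × ZMod N → ℂ)
    (hthat : ∀ i ξ, that i ξ
      = ∑ x : ZMod M × ZMod N, (t i x : ℂ) * (starRingEnd ℂ) (χ ξ x))
    (ξ : ZMod M × ZMod N)
    (u : Fin 3 × (ZMod M × ZMod N) → ℂ)
    (hu : ∀ i x, u (i, x) = that i ξ * χ ξ x) :
    (S.map (fun r : ℝ => (r : ℂ))).mulVec u
      = ((∑ c : Fin 3, Complex.normSq (that c ξ) : ℝ) : ℂ) • u := by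
  have hχξ : χ ξ = torusAddChar ξ := funext fun x => by rw [hχ, torusAddChar_apply_eq_exp]
  have hcoeff (i : Fin 3) :
      that i ξ = discreteFourierCoeff (fun x => (t i x : ℂ)) (torusAddChar ξ) := by
    rw [hthat, hχξ, discreteFourierCoeff]
  have hcov : S.map (fun r : ℝ => (r : ℂ)) = adsnCovariance fun i x => (t i x : ℂ) := by
    ext ⟨i, x⟩ ⟨j, y⟩
    simp [adsnCovariance, hS]
  have hmode : u = adsnMode (fun i x => (t i x : ℂ)) (torusAddChar ξ) :=
    funext fun ⟨i, x⟩ => by rw [hu, hχξ, hcoeff, adsnMode]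
  simp_rw [hcov, hmode, hcoeff, normSq_eq_norm_sq]
  exact adsn_covariance_eigenvector_general _ _
end
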